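/- The rectangle group R is isomorphic to the amalgamated free product (pushout) G₁ *_C G₂, where G₁ is the presented group ⟨a, c | a^{n_a} = c^{n_c} = 1⟩, G₂ is the presented group ⟨b, d | b^{n_b} = d^{n_d} = 1⟩, C is the free group on two generators s, t, and the amalgamation homomorphisms are determined by s ↦ a c⁻¹, t ↦ c⁻¹ a into G₁ and s ↦ b d⁻¹, t ↦ d⁻¹ b into G₂; the isomorphism carries the images of a, c, b, d in the pushout to the generators a, c, b, d of R. -/

import Mathlib

/-- The defining relations of the rectangle group `R(n_a, n_b, n_c, n_d)`:
generators `a, b, c, d` (indexed `0, 1, 2, 3`), relations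
`a^{n_a} = b^{n_b} = c^{n_c} = d^{n_d} = 1`, `b a⁻¹ = d c⁻¹`, `c a⁻¹ = d b⁻¹`. -/
def rectRels (na nb nc nd : ℕ) : Set (FreeGroup (Fin 4)) :=
  {FreeGroup.of 0 ^ na, FreeGroup.of 1 ^ nb, FreeGroup.of 2 ^ nc, FreeGroup.of 3 ^ nd,
    FreeGroup.of 1 * (FreeGroup.of 0)⁻¹ * (FreeGroup.of 3 * (FreeGroup.of 2)⁻¹)⁻¹,
    FreeGroup.of 2 * (FreeGroup.of 0)⁻¹ * (FreeGroup.of 3 * (FreeGroup.of 1)⁻¹)⁻¹}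

/-- The rectangle group. -/
abbrev RectGroup (na nb nc nd : ℕ) : Type := PresentedGroup (rectRels na nb nc nd)

/-- The generator `a` of the rectangle group. -/
def Ra (na nb nc nd : ℕ) : RectGroup na nb nc nd := PresentedGroup.of 0
/-- The generator `b` of the rectangle group. -/
def Rb (na nb nc nd : ℕ) : RectGroup na nb nc nd := PresentedGroup.of 1
/-- The generator `c` of the rectangle group. -/
def Rc (na nb nc nd : ℕ) : RectGroup na nb nc nd := PresentedGroup.of 2
/-- The generator `d` of the rectangle group. -/
def Rd (na nb nc nd : ℕ) : RectGroup na nb nc nd := PresentedGroup.of 3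

/-- The relations of the free product of cyclic groups of orders `m` and `n`,
on two generators. -/
def twoCyclicRels (m n : ℕ) : Set (FreeGroup (Fin 2)) :=
  {FreeGroup.of 0 ^ m, FreeGroup.of 1 ^ n}

/-- A two-element family of groups, indexed by `Bool`. -/
def twoFam (G₁ G₂ : Type) : Bool → Type := fun i => match i with
  | true => G₁
  | false => G₂

instance twoFamGroup (G₁ G₂ : Type) [Group G₁] [Group G₂] :
    (i : Bool) → Group (twoFam G₁ G₂ i) := fun i => match i with
  | true => inferInstanceAs (Group G₁)
  | false => inferInstanceAs (Group G₂)

/-- A pair of homomorphisms out of `K`, packaged as a `Bool`-indexed family. -/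
def twoFamHom {K G₁ G₂ : Type} [Group K] [Group G₁] [Group G₂]
    (φ₁ : K →* G₁) (φ₂ : K →* G₂) : (i : Bool) → K →* twoFam G₁ G₂ i := fun i => match i with
  | true => φ₁
  | false => φ₂

/-- The amalgamation map `C → ⟨u, v | u^m = v^n = 1⟩`, `s ↦ u v⁻¹`, `t ↦ v⁻¹ u`,
where `C` is free on `s, t`. -/
def amalgMap (m n : ℕ) : FreeGroup (Fin 2) →* PresentedGroup (twoCyclicRels m n) :=
  FreeGroup.lift
    ![PresentedGroup.of 0 * (PresentedGroup.of 1)⁻¹,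
      (PresentedGroup.of 1)⁻¹ * PresentedGroup.of 0]


/-- Hom out of `⟨u, v | u^m = v^n = 1⟩`. -/
def twoLift {K : Type} [Group K] (m n : ℕ) (u v : K) (hu : u ^ m = 1) (hv : v ^ n = 1) :
    PresentedGroup (twoCyclicRels m n) →* K :=
  PresentedGroup.toGroup (f := ![u, v]) (by
    intro r hr
    rcases hr with rfl | rfl
    · simpa using hu
    · simpa using hv)

theorem twoLift_zero {K : Type} [Group K] (m n : ℕ) (u v : K) (hu : u ^ m = 1) (hv : v ^ n = 1) :
    twoLift m n u v hu hv (PresentedGroup.of 0) = u := by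
  simp [twoLift]

theorem twoLift_one {K : Type} [Group K] (m n : ℕ) (u v : K) (hu : u ^ m = 1) (hv : v ^ n = 1) :
    twoLift m n u v hu hv (PresentedGroup.of 1) = v := by
  simp [twoLift]

theorem two_pow_zero (m n : ℕ) :
    (PresentedGroup.of 0 : PresentedGroup (twoCyclicRels m n)) ^ m = 1 :=
  PresentedGroup.one_of_mem (rels := twoCyclicRels m n) (x := FreeGroup.of 0 ^ m)
    (by simp [twoCyclicRels])

theorem two_pow_one (m n : ℕ) :
    (PresentedGroup.of 1 : PresentedGroup (twoCyclicRels m n)) ^ n = 1 :=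
  PresentedGroup.one_of_mem (rels := twoCyclicRels m n) (x := FreeGroup.of 1 ^ n)
    (by simp [twoCyclicRels])

theorem two_ext {K : Type} [Group K] {m n : ℕ} {f g : PresentedGroup (twoCyclicRels m n) →* K}
    (h0 : f (PresentedGroup.of 0) = g (PresentedGroup.of 0))
    (h1 : f (PresentedGroup.of 1) = g (PresentedGroup.of 1)) : f = g := by
  apply PresentedGroup.ext
  intro x
  fin_cases x
  · exact h0
  · exact h1

theorem amalg_zero (m n : ℕ) : amalgMap m n (FreeGroup.of 0) =
    PresentedGroup.of 0 * (PresentedGroup.of 1)⁻¹ := by simp [amalgMap]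

theorem amalg_one (m n : ℕ) : amalgMap m n (FreeGroup.of 1) =
    (PresentedGroup.of 1)⁻¹ * PresentedGroup.of 0 := by simp [amalgMap]

section
variable (na nb nc nd : ℕ)

theorem Ra_pow : Ra na nb nc nd ^ na = 1 :=
  PresentedGroup.one_of_mem (rels := rectRels na nb nc nd) (x := FreeGroup.of 0 ^ na)
    (by simp [rectRels])
theorem Rb_pow : Rb na nb nc nd ^ nb = 1 :=
  PresentedGroup.one_of_mem (rels := rectRels na nb nc nd) (x := FreeGroup.of 1 ^ nb)
    (by simp [rectRels])
theorem Rc_pow : Rc na nb nc nd ^ nc = 1 :=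
  PresentedGroup.one_of_mem (rels := rectRels na nb nc nd) (x := FreeGroup.of 2 ^ nc)
    (by simp [rectRels])
theorem Rd_pow : Rd na nb nc nd ^ nd = 1 :=
  PresentedGroup.one_of_mem (rels := rectRels na nb nc nd) (x := FreeGroup.of 3 ^ nd)
    (by simp [rectRels])

theorem R_rel1 : Rb na nb nc nd * (Ra na nb nc nd)⁻¹ = Rd na nb nc nd * (Rc na nb nc nd)⁻¹ :=
  mul_inv_eq_one.1 (PresentedGroup.one_of_mem (rels := rectRels na nb nc nd)
    (x := FreeGroup.of 1 * (FreeGroup.of 0)⁻¹ * (FreeGroup.of 3 * (FreeGroup.of 2)⁻¹)⁻¹)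
    (by simp [rectRels]))

theorem R_rel2 : Rc na nb nc nd * (Ra na nb nc nd)⁻¹ = Rd na nb nc nd * (Rb na nb nc nd)⁻¹ :=
  mul_inv_eq_one.1 (PresentedGroup.one_of_mem (rels := rectRels na nb nc nd)
    (x := FreeGroup.of 2 * (FreeGroup.of 0)⁻¹ * (FreeGroup.of 3 * (FreeGroup.of 1)⁻¹)⁻¹)
    (by simp [rectRels]))

theorem grp_aux1 {K : Type} [Group K] {a b c d : K} :
    b * a⁻¹ = d * c⁻¹ ↔ c⁻¹ * a = d⁻¹ * b := by
  constructor
  · intro h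
    have : b = d * c⁻¹ * a := by rw [← h]; group
    rw [this]; group
  · intro h
    have : b = d * (c⁻¹ * a) := by rw [h]; group
    rw [this]; group

theorem grp_aux2 {K : Type} [Group K] {a b c d : K} :
    c * a⁻¹ = d * b⁻¹ ↔ a * c⁻¹ = b * d⁻¹ := by
  rw [← inv_inj]; simp

/-- Hom out of the rectangle group. -/
def rectLift {K : Type} [Group K] (a b c d : K) (ha : a ^ na = 1) (hb : b ^ nb = 1)
    (hc : c ^ nc = 1) (hd : d ^ nd = 1) (h1 : c⁻¹ * a = d⁻¹ * b) (h2 : a * c⁻¹ = b * d⁻¹) :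
    RectGroup na nb nc nd →* K :=
  PresentedGroup.toGroup (f := ![a, b, c, d]) (by
    intro r hr
    rcases hr with rfl | rfl | rfl | rfl | rfl | rfl
    · simpa using ha
    · simpa using hb
    · simpa using hc
    · simpa using hd
    · have := mul_inv_eq_one.2 (grp_aux1.2 h1)
      simpa using this
    · have := mul_inv_eq_one.2 (grp_aux2.2 h2)
      simpa using this)

/-- The two legs of the forward map. -/
def fwdFam : (i : Bool) → twoFam (PresentedGroup (twoCyclicRels na nc))
    (PresentedGroup (twoCyclicRels nb nd)) i →* RectGroup na nb nc nd := fun i => match i with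
  | true => twoLift na nc (Ra na nb nc nd) (Rc na nb nc nd) (Ra_pow ..) (Rc_pow ..)
  | false => twoLift nb nd (Rb na nb nc nd) (Rd na nb nc nd) (Rb_pow ..) (Rd_pow ..)

theorem legs_eq : (twoLift nb nd (Rb na nb nc nd) (Rd na nb nc nd) (Rb_pow ..) (Rd_pow ..)).comp
      (amalgMap nb nd) =
    (twoLift na nc (Ra na nb nc nd) (Rc na nb nc nd) (Ra_pow ..) (Rc_pow ..)).comp
      (amalgMap na nc) := by
  apply FreeGroup.ext_hom
  intro x
  fin_cases x
  · change twoLift nb nd _ _ (Rb_pow na nb nc nd) (Rd_pow na nb nc nd)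
        (amalgMap nb nd (FreeGroup.of 0)) =
      twoLift na nc _ _ (Ra_pow na nb nc nd) (Rc_pow na nb nc nd) (amalgMap na nc (FreeGroup.of 0))
    rw [amalg_zero, amalg_zero, map_mul, map_mul, map_inv, map_inv, twoLift_zero, twoLift_one,
      twoLift_zero, twoLift_one]
    exact (grp_aux2.1 (R_rel2 ..)).symm
  · change twoLift nb nd _ _ (Rb_pow na nb nc nd) (Rd_pow na nb nc nd)
        (amalgMap nb nd (FreeGroup.of 1)) =
      twoLift na nc _ _ (Ra_pow na nb nc nd) (Rc_pow na nb nc nd) (amalgMap na nc (FreeGroup.of 1))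
    rw [amalg_one, amalg_one, map_mul, map_mul, map_inv, map_inv, twoLift_zero, twoLift_one,
      twoLift_zero, twoLift_one]
    exact (grp_aux1.1 (R_rel1 ..)).symm

/-- The forward map. -/
def fwd : Monoid.PushoutI (twoFamHom (amalgMap na nc) (amalgMap nb nd)) →*
    RectGroup na nb nc nd :=
  Monoid.PushoutI.lift (fwdFam na nb nc nd)
    ((twoLift na nc (Ra na nb nc nd) (Rc na nb nc nd) (Ra_pow ..) (Rc_pow ..)).comp
      (amalgMap na nc)) (by
    intro i
    cases i
    · exact legs_eq na nb nc nd
    · rfl)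

/-- The first leg of the pushout. -/
def leg1 : PresentedGroup (twoCyclicRels na nc) →*
    Monoid.PushoutI (twoFamHom (amalgMap na nc) (amalgMap nb nd)) :=
  Monoid.PushoutI.of (φ := twoFamHom (amalgMap na nc) (amalgMap nb nd)) true

/-- The second leg of the pushout. -/
def leg2 : PresentedGroup (twoCyclicRels nb nd) →*
    Monoid.PushoutI (twoFamHom (amalgMap na nc) (amalgMap nb nd)) :=
  Monoid.PushoutI.of (φ := twoFamHom (amalgMap na nc) (amalgMap nb nd)) false

theorem leg_eq (x : FreeGroup (Fin 2)) :
    leg1 na nb nc nd (amalgMap na nc x) = leg2 na nb nc nd (amalgMap nb nd x) :=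
  (Monoid.PushoutI.of_apply_eq_base (twoFamHom (amalgMap na nc) (amalgMap nb nd)) true x).trans
  (Monoid.PushoutI.of_apply_eq_base (twoFamHom (amalgMap na nc) (amalgMap nb nd)) false x).symm

theorem fwd_leg1 (x) : fwd na nb nc nd (leg1 na nb nc nd x) =
    twoLift na nc (Ra na nb nc nd) (Rc na nb nc nd) (Ra_pow ..) (Rc_pow ..) x :=
  Monoid.PushoutI.lift_of (φ := twoFamHom (amalgMap na nc) (amalgMap nb nd)) _ _ _ (i := true) x

theorem fwd_leg2 (x) : fwd na nb nc nd (leg2 na nb nc nd x) =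
    twoLift nb nd (Rb na nb nc nd) (Rd na nb nc nd) (Rb_pow ..) (Rd_pow ..) x :=
  Monoid.PushoutI.lift_of (φ := twoFamHom (amalgMap na nc) (amalgMap nb nd)) _ _ _ (i := false) x

/-- The backward map. -/
def bwd : RectGroup na nb nc nd →*
    Monoid.PushoutI (twoFamHom (amalgMap na nc) (amalgMap nb nd)) :=
  rectLift na nb nc nd (leg1 na nb nc nd (PresentedGroup.of 0))
    (leg2 na nb nc nd (PresentedGroup.of 0))
    (leg1 na nb nc nd (PresentedGroup.of 1)) (leg2 na nb nc nd (PresentedGroup.of 1))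
    (by rw [← map_pow, two_pow_zero, map_one]) (by rw [← map_pow, two_pow_zero, map_one])
    (by rw [← map_pow, two_pow_one, map_one]) (by rw [← map_pow, two_pow_one, map_one])
    (by
      have := leg_eq na nb nc nd (FreeGroup.of 1)
      rwa [amalg_one, amalg_one, map_mul, map_mul, map_inv, map_inv] at this)
    (by
      have := leg_eq na nb nc nd (FreeGroup.of 0)
      rwa [amalg_zero, amalg_zero, map_mul, map_mul, map_inv, map_inv] at this)

theorem bwd_a : bwd na nb nc nd (Ra na nb nc nd) = leg1 na nb nc nd (PresentedGroup.of 0) := by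
  simp [bwd, rectLift, Ra]
theorem bwd_b : bwd na nb nc nd (Rb na nb nc nd) = leg2 na nb nc nd (PresentedGroup.of 0) := by
  simp [bwd, rectLift, Rb]
theorem bwd_c : bwd na nb nc nd (Rc na nb nc nd) = leg1 na nb nc nd (PresentedGroup.of 1) := by
  simp [bwd, rectLift, Rc]
theorem bwd_d : bwd na nb nc nd (Rd na nb nc nd) = leg2 na nb nc nd (PresentedGroup.of 1) := by
  simp [bwd, rectLift, Rd]

theorem bwd_fwd : (bwd na nb nc nd).comp (fwd na nb nc nd) = MonoidHom.id _ := by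
  apply Monoid.PushoutI.hom_ext_nonempty
  intro i
  cases i
  · refine two_ext (m := nb) (n := nd) ?_ ?_
    · have h : bwd na nb nc nd (fwd na nb nc nd (leg2 na nb nc nd (PresentedGroup.of 0))) =
          leg2 na nb nc nd (PresentedGroup.of 0) := by
        rw [fwd_leg2, twoLift_zero, bwd_b]
      exact h
    · have h : bwd na nb nc nd (fwd na nb nc nd (leg2 na nb nc nd (PresentedGroup.of 1))) =
          leg2 na nb nc nd (PresentedGroup.of 1) := by
        rw [fwd_leg2, twoLift_one, bwd_d]
      exact h
  · refine two_ext (m := na) (n := nc) ?_ ?_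
    · have h : bwd na nb nc nd (fwd na nb nc nd (leg1 na nb nc nd (PresentedGroup.of 0))) =
          leg1 na nb nc nd (PresentedGroup.of 0) := by
        rw [fwd_leg1, twoLift_zero, bwd_a]
      exact h
    · have h : bwd na nb nc nd (fwd na nb nc nd (leg1 na nb nc nd (PresentedGroup.of 1))) =
          leg1 na nb nc nd (PresentedGroup.of 1) := by
        rw [fwd_leg1, twoLift_one, bwd_c]
      exact h

theorem fwd_bwd : (fwd na nb nc nd).comp (bwd na nb nc nd) = MonoidHom.id _ := by
  apply PresentedGroup.ext
  intro x
  fin_cases x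
  · change fwd na nb nc nd (bwd na nb nc nd (Ra na nb nc nd)) = Ra na nb nc nd
    rw [bwd_a, fwd_leg1, twoLift_zero]
  · change fwd na nb nc nd (bwd na nb nc nd (Rb na nb nc nd)) = Rb na nb nc nd
    rw [bwd_b, fwd_leg2, twoLift_zero]
  · change fwd na nb nc nd (bwd na nb nc nd (Rc na nb nc nd)) = Rc na nb nc nd
    rw [bwd_c, fwd_leg1, twoLift_one]
  · change fwd na nb nc nd (bwd na nb nc nd (Rd na nb nc nd)) = Rd na nb nc nd
    rw [bwd_d, fwd_leg2, twoLift_one]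

end

/-- `R` is the amalgamated free product `G₁ *_C G₂` with
`G₁ = ⟨a, c | a^{n_a} = c^{n_c} = 1⟩`, `G₂ = ⟨b, d | b^{n_b} = d^{n_d} = 1⟩`,
`C` free on `s, t`, amalgamated via `s ↦ a c⁻¹, t ↦ c⁻¹ a` and `s ↦ b d⁻¹, t ↦ d⁻¹ b`;
the isomorphism carries the images of `a, c, b, d` in the pushout to the
generators `a, c, b, d` of `R`. -/
theorem rect_amalgam_ac_bd (na nb nc nd : ℕ)
    (hna : 2 ≤ na) (hnb : 2 ≤ nb) (hnc : 2 ≤ nc) (hnd : 2 ≤ nd) :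
    ∃ e : Monoid.PushoutI (twoFamHom (amalgMap na nc) (amalgMap nb nd)) ≃*
        RectGroup na nb nc nd,
      e (Monoid.PushoutI.of (φ := twoFamHom (amalgMap na nc) (amalgMap nb nd)) true
          (PresentedGroup.of 0)) = Ra na nb nc nd ∧
      e (Monoid.PushoutI.of (φ := twoFamHom (amalgMap na nc) (amalgMap nb nd)) true
          (PresentedGroup.of 1)) = Rc na nb nc nd ∧
      e (Monoid.PushoutI.of (φ := twoFamHom (amalgMap na nc) (amalgMap nb nd)) false
          (PresentedGroup.of 0)) = Rb na nb nc nd ∧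
      e (Monoid.PushoutI.of (φ := twoFamHom (amalgMap na nc) (amalgMap nb nd)) false
          (PresentedGroup.of 1)) = Rd na nb nc nd := by
  refine ⟨(fwd na nb nc nd).toMulEquiv (bwd na nb nc nd) (bwd_fwd ..) (fwd_bwd ..), ?_, ?_, ?_, ?_⟩
  · exact (fwd_leg1 ..).trans (twoLift_zero ..)
  · exact (fwd_leg1 ..).trans (twoLift_one ..)
  · exact (fwd_leg2 ..).trans (twoLift_zero ..)
  · exact (fwd_leg2 ..).trans (twoLift_one ..)
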